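/- Let p be an odd prime, M a cyclic group of order p^n, and H a nontrivial subgroup of (Z/p^n)^× acting on M via the natural identification Aut(M) ≅ (Z/p^n)^×. Then H^1(H, M) = 0 and H^2(H, M) = 0. -/

import Mathlib

open groupCohomology

lemma aux_pow_dvd (p : ℕ) (hp : p.Prime) (hodd : Odd p) (G u : ℤ) (a : ℕ) (ha : a ≠ 0)
    (hG : G - 1 = (p : ℤ) ^ a * u) (hu : ¬ (p : ℤ) ∣ u) (k : ℕ) (j : ℕ) :
    (p : ℤ) ^ (a + j) ∣ G ^ k - 1 ↔ p ^ j ∣ k := by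
  have h1 : (p : ℤ) ∣ G - 1 := hG ▸ Dvd.dvd.mul_right (dvd_pow_self _ ha) u
  have hpp : Prime (p : ℤ) := Nat.prime_iff_prime_int.1 hp
  have h2 : ¬ (p : ℤ) ∣ G := fun h => hpp.not_isUnit (isUnit_of_dvd_one (by
    simpa using dvd_sub h h1))
  have h3 := Int.emultiplicity_pow_sub_pow hp hodd (x := G) (y := 1) h1 h2 k
  have h4 : emultiplicity (p : ℤ) (G - 1) = a := by
    rw [hG, emultiplicity_mul hpp, emultiplicity_eq_zero.2 hu, add_zero,
      emultiplicity_pow_self_of_prime hpp]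
  rw [one_pow, h4] at h3
  rw [pow_dvd_iff_le_emultiplicity, h3, pow_dvd_iff_le_emultiplicity]
  push_cast
  exact ENat.add_le_add_iff_left (ENat.natCast_ne_top a)

lemma aux_isUnit (p : ℕ) (hp : p.Prime) (n : ℕ) (u : ℤ) (hu : ¬ (p : ℤ) ∣ u) :
    IsUnit ((u : ZMod (p ^ n))) := by
  have hpp : Prime (p : ℤ) := Nat.prime_iff_prime_int.1 hp
  have hc : IsCoprime u (((p ^ n : ℕ) : ℤ)) := by
    push_cast
    exact ((hpp.coprime_iff_not_dvd.2 hu).symm).pow_right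
  obtain ⟨x, y, hxy⟩ := hc
  refine IsUnit.of_mul_eq_one (x : ZMod (p ^ n)) ?_
  have := congrArg (Int.cast : ℤ → ZMod (p ^ n)) hxy
  push_cast at this
  have h0 : (p : ZMod (p ^ n)) ^ n = 0 := by exact_mod_cast ZMod.natCast_self (p ^ n)
  rw [h0] at this
  rw [mul_comm]; simpa using this

lemma aux_arith (p : ℕ) (hp : p.Prime) (hodd : Odd p) (n : ℕ) (g : (ZMod (p ^ n))ˣ)
    (hg : g ≠ 1) : ∃ a b : ℕ, a + b = n ∧ ∃ u v : (ZMod (p ^ n))ˣ,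
      (g : ZMod (p ^ n)) - 1 = p ^ a * u ∧
      ∑ i ∈ Finset.range (orderOf g), (g : ZMod (p ^ n)) ^ i = p ^ b * v := by
  have : NeZero (p ^ n) := ⟨pow_ne_zero _ hp.ne_zero⟩
  have hpp : Prime (p : ℤ) := Nat.prime_iff_prime_int.1 hp
  have h0 : (p : ZMod (p ^ n)) ^ n = 0 := by exact_mod_cast ZMod.natCast_self (p ^ n)
  obtain ⟨G, hGg⟩ := ZMod.intCast_surjective (g : ZMod (p ^ n))
  have hne : G - 1 ≠ 0 := by
    intro h
    apply hg
    ext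
    rw [← hGg, sub_eq_zero.1 h]; simp
  have hfin : FiniteMultiplicity (p : ℤ) (G - 1) :=
    FiniteMultiplicity.of_prime_left hpp hne
  obtain ⟨u, hG, hu⟩ := hfin.exists_eq_pow_mul_and_not_dvd
  generalize multiplicity (p : ℤ) (G - 1) = a at hG
  have key : ∀ k, g ^ k = 1 ↔ (p : ℤ) ^ n ∣ G ^ k - 1 := by
    intro k
    have := ZMod.intCast_zmod_eq_zero_iff_dvd (G ^ k - 1) (p ^ n)
    push_cast at this
    rw [← this, hGg, sub_eq_zero, Units.ext_iff]
    simp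
  have han : a < n := by
    by_contra! h
    apply hg
    have := (key 1).2 (by rw [pow_one, hG]; exact (pow_dvd_pow _ h).mul_right u)
    simpa using this
  have hgu : (g : ZMod (p ^ n)) - 1 = p ^ a * (u : ZMod (p ^ n)) := by
    rw [← hGg]; exact_mod_cast congrArg (Int.cast : ℤ → ZMod (p ^ n)) hG
  have hU := aux_isUnit p hp n u hu
  have hS : (∑ i ∈ Finset.range (orderOf g), (g : ZMod (p ^ n)) ^ i) *
      ((g : ZMod (p ^ n)) - 1) = 0 := by
    rw [geom_sum_mul, ← Units.val_pow_eq_pow_val, pow_orderOf_eq_one]; simp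
  rcases Nat.eq_zero_or_pos a with rfl | ha
  · refine ⟨0, n, by simp, hU.unit, 1, by simpa using hgu, ?_⟩
    rw [h0, zero_mul]
    rw [hgu, pow_zero, one_mul] at hS
    exact (hU.mul_left_eq_zero).1 hS
  · obtain ⟨b, rfl⟩ := Nat.exists_eq_add_of_lt han
    have L := aux_pow_dvd p hp hodd G u a ha.ne' hG hu
    have hord : orderOf g = p ^ (b + 1) := by
      refine Nat.dvd_antisymm ?_ ?_
      · rw [orderOf_dvd_iff_pow_eq_one, key, add_assoc, L]
      · rw [← L, ← add_assoc, ← key, pow_orderOf_eq_one]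
    have hgs := geom_sum_mul G (orderOf g)
    obtain ⟨w, hw⟩ := (L (orderOf g) (b + 1)).2 hord.symm.dvd
    have hpa : (p : ℤ) ^ a ≠ 0 := pow_ne_zero _ hpp.ne_zero
    have hSu : (∑ i ∈ Finset.range (orderOf g), G ^ i) * u = p ^ (b + 1) * w := by
      apply mul_left_cancel₀ hpa
      rw [hw, hG] at hgs
      have h6 := pow_add (p : ℤ) a (b + 1)
      linear_combination hgs + w * h6
    have hwn : ¬ (p : ℤ) ∣ w := by
      rintro ⟨z, rfl⟩
      have := (L (orderOf g) (b + 2)).1 ⟨z, by rw [hw]; ring⟩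
      rw [hord, Nat.pow_dvd_pow_iff_le_right hp.one_lt] at this
      omega
    have hW := aux_isUnit p hp (a + b + 1) w hwn
    refine ⟨a, b + 1, by ring, hU.unit, hW.unit * hU.unit⁻¹, by simpa using hgu, ?_⟩
    have h5 := congrArg (Int.cast : ℤ → ZMod (p ^ (a + b + 1))) hSu
    push_cast at h5
    rw [hGg] at h5
    rw [Units.val_mul, ← mul_assoc, Units.eq_mul_inv_iff_mul_eq]
    simpa using h5

lemma aux_exact (p : ℕ) (hp : p.Prime) (n a b : ℕ) (hab : a + b = n)
    (u v : (ZMod (p ^ n))ˣ) (x : ZMod (p ^ n)) (h : (p ^ b * v : ZMod (p ^ n)) * x = 0) :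
    ∃ y, (p ^ a * u : ZMod (p ^ n)) * y = x := by
  have h1 : (p ^ b : ZMod (p ^ n)) * x = 0 := by
    have := congrArg (fun t => (↑v⁻¹ : ZMod (p ^ n)) * t) h
    simp only [mul_zero] at this
    rw [← this]
    linear_combination (-(p ^ b : ZMod (p ^ n)) * x) * (Units.inv_mul v)
  obtain ⟨X, rfl⟩ := ZMod.intCast_surjective x
  have h2 : ((p ^ n : ℕ) : ℤ) ∣ p ^ b * X := by
    rw [← ZMod.intCast_zmod_eq_zero_iff_dvd]; push_cast; exact h1
  have h3 : (p : ℤ) ^ a ∣ X := by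
    have hpb : (p : ℤ) ^ b ≠ 0 := pow_ne_zero _ (by exact_mod_cast hp.ne_zero)
    apply (mul_dvd_mul_iff_left hpb).1
    rw [← pow_add, add_comm, hab]; exact_mod_cast h2
  obtain ⟨Y, rfl⟩ := h3
  refine ⟨↑u⁻¹ * Y, ?_⟩
  push_cast
  linear_combination ((p ^ a : ZMod (p ^ n)) * Y) * (Units.mul_inv u)

/-- For an odd prime `p`, if `M = ℤ/pⁿ` (a cyclic group of order `pⁿ`) and `H` is a
nontrivial subgroup of `(ℤ/pⁿ)ˣ = Aut(M)` acting on `M` by multiplication, then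
`H¹(H, M) = 0` and `H²(H, M) = 0`. -/
theorem stmt0 (p : ℕ) (hp : p.Prime) (hodd : Odd p) (n : ℕ) (hn : 0 < n)
    (H : Subgroup (ZMod (p ^ n))ˣ) (hH : H ≠ ⊥) :
    Subsingleton (groupCohomology.H1 (Rep.ofDistribMulAction ℤ H (ZMod (p ^ n)))) ∧
    Subsingleton (groupCohomology.H2 (Rep.ofDistribMulAction ℤ H (ZMod (p ^ n)))) := by
  have : NeZero (p ^ n) := ⟨pow_ne_zero _ hp.ne_zero⟩
  have hcyc : IsCyclic (ZMod (p ^ n))ˣ :=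
    ZMod.isCyclic_units_of_prime_pow p hp (by rintro rfl; exact absurd hodd (by decide)) n
  let _ : Fintype H := Fintype.ofFinite H
  obtain ⟨g, hg⟩ := IsCyclic.exists_generator (α := H)
  have hg1 : (g : (ZMod (p ^ n))ˣ) ≠ 1 := by
    intro h
    apply hH
    rw [Subgroup.eq_bot_iff_forall]
    intro x hx
    obtain ⟨k, hk⟩ := hg ⟨x, hx⟩
    have := congrArg (Subtype.val) hk
    simpa [h] using this.symm
  obtain ⟨a, b, hab, u, v, hu, hv⟩ := aux_arith p hp hodd n g hg1
  set A := Rep.ofDistribMulAction ℤ H (ZMod (p ^ n)) with hA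
  have hN : ∀ x : ZMod (p ^ n), (A.norm.hom.toLinearMap : _ → _) x = (p ^ b * v : ZMod (p ^ n)) * x := by
    intro x
    have h1 : (A.norm.hom.toLinearMap : _ → _) x = ∑ h : H, ((h : (ZMod (p ^ n))ˣ) : ZMod (p ^ n)) * x := by
      exact LinearMap.sum_apply (M := A) (M₂ := A) Finset.univ (fun h : H => A.ρ h) x
    classical
    rw [h1, ← Finset.sum_mul, ← hv, ← IsCyclic.image_range_orderOf hg, Finset.sum_image,
      Subgroup.orderOf_coe]
    · simp only [SubmonoidClass.coe_pow, Units.val_pow_eq_pow_val]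
      try rfl
    · intro i hi j hj hij
      exact pow_injOn_Iio_orderOf (by simpa using hi) (by simpa using hj) hij
  have hD : ∀ x : ZMod (p ^ n), ((A.applyAsHom g - CategoryTheory.CategoryStruct.id A).hom.toLinearMap : _ → _) x
      = (p ^ a * u : ZMod (p ^ n)) * x := by
    intro x
    rw [← hu, sub_mul, one_mul]
    rfl
  constructor
  · refine subsingleton_of_forall_eq 0 fun z => ?_
    have hs : Function.Surjective (Rep.FiniteCyclicGroup.groupCohomologyπOdd A g hg 1 odd_one) :=
      (ModuleCat.epi_iff_surjective _).1 (by
        have i1 := @CategoryTheory.IsIso.epi_of_iso _ _ _ _ _ (CategoryTheory.Iso.isIso_inv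
          (Rep.FiniteCyclicGroup.subCompNormHom A g).moduleCatCyclesIso)
        refine @CategoryTheory.epi_comp _ _ _ _ _ _ i1 _ ?_
        exact @CategoryTheory.epi_comp _ _ _ _ _ _ inferInstance _ inferInstance)
    obtain ⟨x, rfl⟩ := hs z
    rw [Rep.FiniteCyclicGroup.groupCohomologyπOdd_eq_zero_iff]
    have hx : (A.norm.hom.toLinearMap : _ → _) x.1 = 0 := x.2
    obtain ⟨y, hy⟩ := aux_exact p hp n a b hab u v x.1 ((hN x.1).symm.trans hx)
    exact ⟨y, (hD y).trans hy⟩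
  · refine subsingleton_of_forall_eq 0 fun z => ?_
    have hs : Function.Surjective (Rep.FiniteCyclicGroup.groupCohomologyπEven A g hg 2 even_two) :=
      (ModuleCat.epi_iff_surjective _).1 (by
        have i1 := @CategoryTheory.IsIso.epi_of_iso _ _ _ _ _ (CategoryTheory.Iso.isIso_inv
          (Rep.FiniteCyclicGroup.normHomCompSub A g).moduleCatCyclesIso)
        refine @CategoryTheory.epi_comp _ _ _ _ _ _ i1 _ ?_
        exact @CategoryTheory.epi_comp _ _ _ _ _ _ inferInstance _ inferInstance)
    obtain ⟨x, rfl⟩ := hs z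
    rw [Rep.FiniteCyclicGroup.groupCohomologyπEven_eq_zero_iff]
    have hx : ((A.applyAsHom g - CategoryTheory.CategoryStruct.id A).hom.toLinearMap : _ → _) x.1 = 0 := x.2
    obtain ⟨y, hy⟩ := aux_exact p hp n b a (by omega) v u x.1 ((hD x.1).symm.trans hx)
    exact ⟨y, (hN y).trans hy⟩
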